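/- arXiv:2409.19384 — 2 statements merged into one kernel-verified Lean document; each statement's English description precedes it below -/
import Mathlib

section
/- The isotropic reduction satisfies a symmetric Third Isomorphism Theorem: if (M, ψ) is a symmetric bilinear (or symplectic) form on a finite dimensional vector space and V ⊆ U ⊆ M with U isotropic (hence V isotropic), then there is a canonical isometry (M ∕∕ U) ≅ ((M ∕∕ V) ∕∕ (U/V)), where M ∕∕ U := U^⊥ / U with the induced form. -/
open LinearMap (BilinForm)

section QuotForm

variable {K : Type*} [Field K] {N : Type*} [AddCommGroup N] [Module K N]

/-- The bilinear form induced on a quotient `N ⧸ T` by a bilinear form `B` on `N` whose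
left and right radicals contain `T`. -/
noncomputable def quotBilin (B : BilinForm K N) (T : Submodule K N)
    (hl : ∀ t ∈ T, B t = 0) (hr : ∀ t ∈ T, ∀ x : N, B x t = 0) :
    BilinForm K (N ⧸ T) :=
  Submodule.liftQ T
    { toFun := fun x => Submodule.liftQ T (B x) (by
        intro t ht
        simp [LinearMap.mem_ker, hr t ht x])
      map_add' := by
        intro x y
        refine LinearMap.ext fun z => ?_
        obtain ⟨w, rfl⟩ := Submodule.Quotient.mk_surjective T z
        simp
      map_smul' := by
        intro c x
        refine LinearMap.ext fun z => ?_
        obtain ⟨w, rfl⟩ := Submodule.Quotient.mk_surjective T z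
        simp }
    (by
      intro t ht
      simp only [LinearMap.mem_ker]
      refine LinearMap.ext fun z => ?_
      obtain ⟨w, rfl⟩ := Submodule.Quotient.mk_surjective T z
      simp [hl t ht])

end QuotForm

section

variable {K : Type*} [Field K] {M : Type*} [AddCommGroup M] [Module K M]
  [FiniteDimensional K M]

/-- The copy of a submodule `W ≤ O` inside `↥O`. -/
def inside (O W : Submodule K M) : Submodule K ↥O := W.comap O.subtype

/-- The underlying space of the isotropic reduction `M ∕∕ W = W^⊥ / W`. -/
abbrev IsotropicRed (ψ : BilinForm K M) (W : Submodule K M) :=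
  ↥(ψ.orthogonal W) ⧸ inside (ψ.orthogonal W) W

/-- The induced form on the isotropic reduction `M ∕∕ W`. -/
noncomputable def redForm (ψ : BilinForm K M) (W : Submodule K M)
    (hl : ∀ t ∈ inside (ψ.orthogonal W) W, (ψ.restrict (ψ.orthogonal W)) t = 0)
    (hr : ∀ t ∈ inside (ψ.orthogonal W) W, ∀ x, (ψ.restrict (ψ.orthogonal W)) x t = 0) :
    BilinForm K (IsotropicRed ψ W) :=
  quotBilin (ψ.restrict (ψ.orthogonal W)) (inside (ψ.orthogonal W) W) hl hr

end

/-!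
Since `V ≤ U`, a vector orthogonal to `U` is orthogonal to `V`, and `x ↦ x + V` maps `U^⊥` to
`M ∕∕ V` preserving the forms. The preimage in `V^⊥` of `U/V` is `U` and that of `(U/V)^⊥` is `U^⊥`,
so this map is onto `(U/V)^⊥` and carries exactly `U` into `U/V`: passing to the quotients gives the
isometry. It sends `x + U` to `(x + V) + U/V`.
-/

section Quotient

/-- The isomorphism `N ⧸ S ≃ N' ⧸ S'` induced by a surjection `N → N'` under which `S` is the
full preimage of `S'`. -/
noncomputable def quotientEquivOfSurjective {R N N' : Type*} [Ring R] [AddCommGroup N] [Module R N]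
    [AddCommGroup N'] [Module R N'] {S : Submodule R N} {S' : Submodule R N'} (f : N →ₗ[R] N')
    (hf : Function.Surjective f) (hS : S'.comap f = S) : (N ⧸ S) ≃ₗ[R] N' ⧸ S' :=
  (Submodule.quotEquivOfEq S (S'.mkQ ∘ₗ f).ker
      (by rw [LinearMap.ker_comp, Submodule.ker_mkQ, hS])).trans
    ((S'.mkQ ∘ₗ f).quotKerEquivOfSurjective (S'.mkQ_surjective.comp hf))

@[simp]
lemma quotientEquivOfSurjective_mk {R N N' : Type*} [Ring R] [AddCommGroup N] [Module R N]
    [AddCommGroup N'] [Module R N'] {S : Submodule R N} {S' : Submodule R N'} (f : N →ₗ[R] N')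
    (hf : Function.Surjective f) (hS : S'.comap f = S) (x : N) :
    quotientEquivOfSurjective f hf hS (Submodule.Quotient.mk x) = Submodule.Quotient.mk (f x) :=
  rfl

variable {K N N' : Type*} [Field K] [AddCommGroup N] [Module K N] [AddCommGroup N'] [Module K N']

@[simp]
lemma quotBilin_mk_mk (B : BilinForm K N) (T : Submodule K N) (hl : ∀ t ∈ T, B t = 0)
    (hr : ∀ t ∈ T, ∀ x, B x t = 0) (x y : N) :
    quotBilin B T hl hr (Submodule.Quotient.mk x) (Submodule.Quotient.mk y) = B x y :=
  rfl

lemma comap_mkQ_orthogonal_map_mkQ (B : BilinForm K N) (T S : Submodule K N)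
    (hl : ∀ t ∈ T, B t = 0) (hr : ∀ t ∈ T, ∀ x, B x t = 0) :
    ((quotBilin B T hl hr).orthogonal (S.map T.mkQ)).comap T.mkQ = B.orthogonal S := by
  ext x
  simp [BilinForm.mem_orthogonal_iff]

/-- The isometry between the quotient forms induced by a form-preserving surjection under which
`S` is the full preimage of `S'`. -/
noncomputable def quotBilinIsometryEquiv {B : BilinForm K N} {B' : BilinForm K N'}
    {S : Submodule K N} {S' : Submodule K N'}
    (hl : ∀ t ∈ S, B t = 0) (hr : ∀ t ∈ S, ∀ x, B x t = 0)
    (hl' : ∀ t ∈ S', B' t = 0) (hr' : ∀ t ∈ S', ∀ x, B' x t = 0)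
    (f : N →ₗ[K] N') (hf : Function.Surjective f) (hS : S'.comap f = S)
    (hB : ∀ x y, B' (f x) (f y) = B x y) :
    (quotBilin B S hl hr).IsometryEquiv (quotBilin B' S' hl' hr') where
  toLinearEquiv := quotientEquivOfSurjective f hf hS
  map_app' a b := by
    obtain ⟨x, rfl⟩ := Submodule.Quotient.mk_surjective S a
    obtain ⟨y, rfl⟩ := Submodule.Quotient.mk_surjective S b
    simpa using hB x y

end Quotient

section Reduction

variable {K M : Type*} [Field K] [AddCommGroup M] [Module K M]

lemma orthogonal_restrict_inside (ψ : BilinForm K M) {O S : Submodule K M} (hSO : S ≤ O) :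
    (ψ.restrict O).orthogonal (inside O S) = inside O (ψ.orthogonal S) := by
  ext x
  exact ⟨fun h n hn => h ⟨n, hSO hn⟩ hn, fun h n hn => h n hn⟩

/-- The image of `U ∩ V^⊥` in `M ∕∕ V`; it is `U/V` when `V ≤ U ≤ V^⊥`. -/
abbrev imageInRed (ψ : BilinForm K M) (V U : Submodule K M) : Submodule K (IsotropicRed ψ V) :=
  (inside (ψ.orthogonal V) U).map (inside (ψ.orthogonal V) V).mkQ

variable (ψ : BilinForm K M) {V U : Submodule K M}

lemma comap_mkQ_imageInRed (hVU : V ≤ U) :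
    (imageInRed ψ V U).comap (inside (ψ.orthogonal V) V).mkQ = inside (ψ.orthogonal V) U := by
  rw [Submodule.comap_map_mkQ, sup_eq_right]
  exact Submodule.comap_mono hVU

variable (hl : ∀ t ∈ inside (ψ.orthogonal V) V, (ψ.restrict (ψ.orthogonal V)) t = 0)
  (hr : ∀ t ∈ inside (ψ.orthogonal V) V, ∀ x, (ψ.restrict (ψ.orthogonal V)) x t = 0)

lemma comap_mkQ_orthogonal_imageInRed (hUV : U ≤ ψ.orthogonal V) :
    ((redForm ψ V hl hr).orthogonal (imageInRed ψ V U)).comap (inside (ψ.orthogonal V) V).mkQ =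
      inside (ψ.orthogonal V) (ψ.orthogonal U) :=
  (comap_mkQ_orthogonal_map_mkQ _ _ _ hl hr).trans (orthogonal_restrict_inside ψ hUV)

lemma mk_mem_orthogonal_imageInRed_iff (hUV : U ≤ ψ.orthogonal V) (x : ψ.orthogonal V) :
    Submodule.Quotient.mk x ∈ (redForm ψ V hl hr).orthogonal (imageInRed ψ V U) ↔
      (x : M) ∈ ψ.orthogonal U :=
  SetLike.ext_iff.mp (comap_mkQ_orthogonal_imageInRed ψ hl hr hUV) x

/-- The map `x ↦ x + V` from `U^⊥` to the orthogonal of `U/V` in `M ∕∕ V`. -/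
noncomputable def orthogonalToRed (hVU : V ≤ U) (hUV : U ≤ ψ.orthogonal V) :
    ψ.orthogonal U →ₗ[K] (redForm ψ V hl hr).orthogonal (imageInRed ψ V U) :=
  ((inside (ψ.orthogonal V) V).mkQ ∘ₗ
      Submodule.inclusion (BilinForm.orthogonal_le hVU)).codRestrict _
    fun x => (mk_mem_orthogonal_imageInRed_iff ψ hl hr hUV _).mpr x.2

lemma orthogonalToRed_surjective (hVU : V ≤ U) (hUV : U ≤ ψ.orthogonal V) :
    Function.Surjective (orthogonalToRed ψ hl hr hVU hUV) := by
  rintro ⟨y, hy⟩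
  obtain ⟨x, rfl⟩ := Submodule.Quotient.mk_surjective _ y
  exact ⟨⟨x, (mk_mem_orthogonal_imageInRed_iff ψ hl hr hUV x).mp hy⟩, rfl⟩

lemma comap_orthogonalToRed_inside (hVU : V ≤ U) (hUV : U ≤ ψ.orthogonal V) :
    (inside _ (imageInRed ψ V U)).comap (orthogonalToRed ψ hl hr hVU hUV) =
      inside (ψ.orthogonal U) U := by
  ext x
  exact SetLike.ext_iff.mp (comap_mkQ_imageInRed ψ hVU)
    (Submodule.inclusion (BilinForm.orthogonal_le hVU) x)

lemma restrict_redForm_orthogonalToRed (hVU : V ≤ U) (hUV : U ≤ ψ.orthogonal V)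
    (x y : ψ.orthogonal U) :
    (redForm ψ V hl hr).restrict ((redForm ψ V hl hr).orthogonal (imageInRed ψ V U))
      (orthogonalToRed ψ hl hr hVU hUV x) (orthogonalToRed ψ hl hr hVU hUV y) = ψ x y :=
  rfl

end Reduction

theorem isotropic_reduction_third_iso_general
    {K M : Type*} [Field K] [AddCommGroup M] [Module K M] (ψ : BilinForm K M)
    (V U : Submodule K M) (hVU : V ≤ U) (hUV : U ≤ ψ.orthogonal V)
    (hl₁ : ∀ t ∈ inside (ψ.orthogonal U) U, (ψ.restrict (ψ.orthogonal U)) t = 0)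
    (hr₁ : ∀ t ∈ inside (ψ.orthogonal U) U, ∀ x, (ψ.restrict (ψ.orthogonal U)) x t = 0)
    (hl₂ : ∀ t ∈ inside (ψ.orthogonal V) V, (ψ.restrict (ψ.orthogonal V)) t = 0)
    (hr₂ : ∀ t ∈ inside (ψ.orthogonal V) V, ∀ x, (ψ.restrict (ψ.orthogonal V)) x t = 0)
    (hl₃ : ∀ t ∈ inside ((redForm ψ V hl₂ hr₂).orthogonal (imageInRed ψ V U)) (imageInRed ψ V U),
      ((redForm ψ V hl₂ hr₂).restrict ((redForm ψ V hl₂ hr₂).orthogonal (imageInRed ψ V U))) t = 0)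
    (hr₃ : ∀ t ∈ inside ((redForm ψ V hl₂ hr₂).orthogonal (imageInRed ψ V U)) (imageInRed ψ V U),
      ∀ x, ((redForm ψ V hl₂ hr₂).restrict
        ((redForm ψ V hl₂ hr₂).orthogonal (imageInRed ψ V U))) x t = 0) :
    ∃ e : (redForm ψ U hl₁ hr₁).IsometryEquiv
        (redForm (redForm ψ V hl₂ hr₂) (imageInRed ψ V U) hl₃ hr₃),
      ∀ (x : M) (hxU : x ∈ ψ.orthogonal U) (hxV : x ∈ ψ.orthogonal V)
        (hx : Submodule.Quotient.mk ⟨x, hxV⟩ ∈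
          (redForm ψ V hl₂ hr₂).orthogonal (imageInRed ψ V U)),
        e (Submodule.Quotient.mk ⟨x, hxU⟩) =
          Submodule.Quotient.mk ⟨Submodule.Quotient.mk ⟨x, hxV⟩, hx⟩ :=
  ⟨quotBilinIsometryEquiv hl₁ hr₁ hl₃ hr₃ (orthogonalToRed ψ hl₂ hr₂ hVU hUV)
      (orthogonalToRed_surjective ψ hl₂ hr₂ hVU hUV)
      (comap_orthogonalToRed_inside ψ hl₂ hr₂ hVU hUV)
      (restrict_redForm_orthogonalToRed ψ hl₂ hr₂ hVU hUV),
    fun _ _ _ _ => rfl⟩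

/-- The symmetric Third Isomorphism Theorem for isotropic reductions: for a reflexive
nondegenerate bilinear form `ψ` on a finite dimensional space `M` and isotropic subspaces
`V ⊆ U ⊆ M`, there is a canonical isometry `(M ∕∕ U) ≅ ((M ∕∕ V) ∕∕ (U/V))`, where
`M ∕∕ W := W^⊥/W` carries the induced form, and `U/V` denotes the image of `U` in
`M ∕∕ V`, an isotropic subspace for the induced form.  (The radical conditions needed to
descend the forms to the quotients, which are automatic, are supplied as hypotheses.) -/
theorem isotropic_reduction_third_iso
    {K : Type*} [Field K] {M : Type*} [AddCommGroup M] [Module K M]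
    [FiniteDimensional K M]
    (ψ : LinearMap.BilinForm K M) (href : ψ.IsRefl) (hnd : ψ.Nondegenerate)
    (V U : Submodule K M) (hVU : V ≤ U)
    (hU : ∀ x ∈ U, ∀ y ∈ U, ψ x y = 0)
    -- radical conditions for the reduction M ∕∕ U
    (hl₁ : ∀ t ∈ inside (ψ.orthogonal U) U, (ψ.restrict (ψ.orthogonal U)) t = 0)
    (hr₁ : ∀ t ∈ inside (ψ.orthogonal U) U, ∀ x, (ψ.restrict (ψ.orthogonal U)) x t = 0)
    -- radical conditions for the reduction M ∕∕ V
    (hl₂ : ∀ t ∈ inside (ψ.orthogonal V) V, (ψ.restrict (ψ.orthogonal V)) t = 0)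
    (hr₂ : ∀ t ∈ inside (ψ.orthogonal V) V, ∀ x, (ψ.restrict (ψ.orthogonal V)) x t = 0)
    -- the image Ū = U/V of U in M ∕∕ V
    (Ubar : Submodule K (IsotropicRed ψ V))
    (hUbar : Ubar = (inside (ψ.orthogonal V) U).map
        (inside (ψ.orthogonal V) V).mkQ)
    -- radical conditions for the second reduction (M ∕∕ V) ∕∕ Ū
    (hl₃ : ∀ t ∈ inside ((redForm ψ V hl₂ hr₂).orthogonal Ubar) Ubar,
        ((redForm ψ V hl₂ hr₂).restrict ((redForm ψ V hl₂ hr₂).orthogonal Ubar)) t = 0)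
    (hr₃ : ∀ t ∈ inside ((redForm ψ V hl₂ hr₂).orthogonal Ubar) Ubar,
        ∀ x, ((redForm ψ V hl₂ hr₂).restrict
          ((redForm ψ V hl₂ hr₂).orthogonal Ubar)) x t = 0) :
    ∃ e : IsotropicRed ψ U ≃ₗ[K] IsotropicRed (redForm ψ V hl₂ hr₂) Ubar,
      ∀ a b : IsotropicRed ψ U,
        redForm (redForm ψ V hl₂ hr₂) Ubar hl₃ hr₃ (e a) (e b)
          = redForm ψ U hl₁ hr₁ a b := by
  subst hUbar
  have hUV : U ≤ ψ.orthogonal V := fun u hu v hv => hU v (hVU hv) u hu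
  obtain ⟨e, -⟩ := isotropic_reduction_third_iso_general ψ V U hVU hUV hl₁ hr₁ hl₂ hr₂
    hl₃ hr₃
  exact ⟨e.toLinearEquiv, e.map_app'⟩
end

section
/- Homotopy cardinality of a 1-type is multiplicative over fibrations in the groupoid sense: if f : X → Y is a map of finite groupoids (finitely many objects up to iso, finite automorphism groups) with all homotopy fibers equivalent to a fixed finite groupoid F, then ‖X‖ = ‖F‖ · ‖Y‖, where ‖G‖ = Σ_{x ∈ π_0 G} 1/|Aut(x)|. -/
open CategoryTheory

/-- The groupoid cardinality `‖G‖ = Σ_{[x] ∈ π₀(G)} 1/|Aut(x)|`, written as a sum over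
all objects: each object `x` contributes `1/(#{y : y ≅ x} · |Aut(x)|)`. -/
noncomputable def gcard (G : Type*) [Category G] : ℚ :=
  ∑ᶠ x : G,
    1 / ((Nat.card {y : G // Nonempty (x ≅ y)} : ℚ) * (Nat.card (x ≅ x) : ℚ))

/-! Counting the isomorphisms from `x` to any object, instead of those from `x` to itself, turns the
contribution of `x` to `‖G‖`, its mass, into `1 / #{isomorphisms out of x}`. An isomorphism out of
an object `(a, b, φ)` of a comma category is an arbitrary pair of isomorphisms out of `a` and `b`,
so masses multiply, and the homotopy fiber over `y` has cardinality `∑_x |Hom(F x, y)| · mass x`.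
Weighting by `mass y` and summing over `y` gives `∑_x mass x`, because in a finite groupoid
`∑_y |Hom(a, y)| · mass y = 1`: every `y` that contributes has the mass of `a`, which is
`1 / ∑_y |Hom(a, y)|`. -/

section Mass

variable {C : Type*} [Category C]

/-- The mass of an object: its contribution to the groupoid cardinality `gcard`. Each isomorphism
class has total mass `1 / |Aut|`, shared equally among its objects. -/
noncomputable def gmass (x : C) : ℚ :=
  1 / ((Nat.card {y : C // Nonempty (x ≅ y)} : ℚ) * (Nat.card (x ≅ x) : ℚ))

theorem gcard_eq_finsum_gmass (C : Type*) [Category C] : gcard C = ∑ᶠ x : C, gmass x :=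
  rfl

theorem card_sigma_iso (x : C) :
    Nat.card (Σ y : C, x ≅ y) = Nat.card {y : C // Nonempty (x ≅ y)} * Nat.card (x ≅ x) :=
  calc Nat.card (Σ y : C, x ≅ y)
    _ = Nat.card (Σ y : {y : C // Nonempty (x ≅ y)}, x ≅ y.1) :=
      Nat.card_congr (Equiv.sigmaSubtypeEquivOfSubset _ _ fun _ e => ⟨e⟩).symm
    _ = Nat.card ({y : C // Nonempty (x ≅ y)} × (x ≅ x)) :=
      Nat.card_congr (Equiv.sigmaEquivProdOfEquiv fun y => y.2.some.symm.isoCongrRight)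
    _ = Nat.card {y : C // Nonempty (x ≅ y)} * Nat.card (x ≅ x) := Nat.card_prod _ _

theorem gmass_eq_inv_card_sigma_iso (x : C) : gmass x = (Nat.card (Σ y : C, x ≅ y) : ℚ)⁻¹ := by
  rw [gmass, card_sigma_iso, Nat.cast_mul, one_div]

theorem gmass_congr {x y : C} (e : x ≅ y) : gmass x = gmass y := by
  rw [gmass_eq_inv_card_sigma_iso, gmass_eq_inv_card_sigma_iso,
    Nat.card_congr (Equiv.sigmaCongrRight fun z => e.isoCongrLeft (Y := z))]

theorem gmass_eq_one [Subsingleton C] [Quiver.IsThin C] (x : C) : gmass x = 1 := by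
  have : Unique {y : C // Nonempty (x ≅ y)} := ⟨⟨⟨x, ⟨Iso.refl x⟩⟩⟩, fun _ => Subsingleton.elim _ _⟩
  have : Unique (x ≅ x) := ⟨⟨Iso.refl x⟩, fun _ => Subsingleton.elim _ _⟩
  simp [gmass]

end Mass

section Comma

variable {A B T : Type*} [Category A] [Category B] [Category T] {L : A ⥤ T} {R : B ⥤ T}

variable (L R) in
/-- The objects `(a, b, φ : L a ⟶ R b)` of a comma category, fibered over the pairs `(a, b)`. -/
def commaEquivSigma : Comma L R ≃ Σ ab : A × B, L.obj ab.1 ⟶ R.obj ab.2 where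
  toFun p := ⟨(p.left, p.right), p.hom⟩
  invFun q := ⟨q.1.1, q.1.2, q.2⟩

/-- A pair of isomorphisms out of `p.left` and `p.right` lifts uniquely to an isomorphism out of
`p`, its target being determined by transport of `p.hom`. -/
def sigmaIsoCommaEquiv (p : Comma L R) :
    (Σ q : Comma L R, p ≅ q) ≃ (Σ a : A, p.left ≅ a) × (Σ b : B, p.right ≅ b) where
  toFun s := (⟨s.1.left, Comma.leftIso s.2⟩, ⟨s.1.right, Comma.rightIso s.2⟩)
  invFun s := ⟨⟨s.1.1, s.2.1, L.map s.1.2.inv ≫ p.hom ≫ R.map s.2.2.hom⟩,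
    Comma.isoMk s.1.2 s.2.2 (by simp [← Functor.map_comp_assoc])⟩
  left_inv := by
    rintro ⟨⟨a, b, ψ⟩, e⟩
    obtain ⟨l, r, h, rfl⟩ : ∃ (l : p.left ≅ a) (r : p.right ≅ b)
        (h : L.map l.hom ≫ ψ = p.hom ≫ R.map r.hom), e = Comma.isoMk l r h :=
      ⟨Comma.leftIso e, Comma.rightIso e, e.hom.w, rfl⟩
    obtain rfl : ψ = L.map l.inv ≫ p.hom ≫ R.map r.hom := by
      simp [← h, ← Functor.map_comp_assoc]
    rfl
  right_inv _ := rfl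

theorem gmass_comma (p : Comma L R) : gmass p = gmass p.left * gmass p.right := by
  simp only [gmass_eq_inv_card_sigma_iso]
  rw [Nat.card_congr (sigmaIsoCommaEquiv p), Nat.card_prod, Nat.cast_mul, mul_inv]

variable (L R) in
theorem gcard_comma [Finite A] [Finite B] [∀ a b, Finite (L.obj a ⟶ R.obj b)] :
    gcard (Comma L R) =
      ∑ᶠ (a : A) (b : B), (Nat.card (L.obj a ⟶ R.obj b) : ℚ) * (gmass a * gmass b) := by
  have := Fintype.ofFinite A
  have := Fintype.ofFinite B
  have (ab : A × B) : Fintype (L.obj ab.1 ⟶ R.obj ab.2) := Fintype.ofFinite _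
  calc gcard (Comma L R)
    _ = ∑ᶠ p : Comma L R, gmass p.left * gmass p.right := finsum_congr gmass_comma
    _ = ∑ᶠ q : Σ ab : A × B, L.obj ab.1 ⟶ R.obj ab.2, gmass q.1.1 * gmass q.1.2 :=
      finsum_comp_equiv (commaEquivSigma L R) (f := fun q => gmass q.1.1 * gmass q.1.2)
    _ = ∑ ab : A × B, (Nat.card (L.obj ab.1 ⟶ R.obj ab.2) : ℚ) * (gmass ab.1 * gmass ab.2) := by
      simp [finsum_eq_sum_of_fintype, Fintype.sum_sigma]
    _ = ∑ᶠ (a : A) (b : B), (Nat.card (L.obj a ⟶ R.obj b) : ℚ) * (gmass a * gmass b) := by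
      simp only [finsum_eq_sum_of_fintype, Fintype.sum_prod_type]

end Comma

theorem gcard_comma_fromPUnit {X Y : Type*} [Category X] [Category Y] [Finite X] (F : X ⥤ Y)
    (y : Y) [∀ x, Finite (F.obj x ⟶ y)] :
    gcard (Comma F (Functor.fromPUnit y)) = ∑ᶠ x : X, (Nat.card (F.obj x ⟶ y) : ℚ) * gmass x := by
  have (x : X) (b) : Finite (F.obj x ⟶ (Functor.fromPUnit y).obj b) :=
    inferInstanceAs (Finite (F.obj x ⟶ y))
  rw [gcard_comma]
  simp [finsum_unique, gmass_eq_one]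

theorem finsum_card_hom_mul_gmass {Y : Type*} [Groupoid Y] [Finite Y] (a : Y)
    [∀ y, Finite (a ⟶ y)] :
    ∑ᶠ y : Y, (Nat.card (a ⟶ y) : ℚ) * gmass y = 1 := by
  have := Fintype.ofFinite Y
  have hmass (y : Y) : (Nat.card (a ⟶ y) : ℚ) * gmass y = Nat.card (a ⟶ y) * gmass a := by
    rcases isEmpty_or_nonempty (a ⟶ y) with _ | ⟨⟨f⟩⟩
    · simp
    · rw [gmass_congr ((Groupoid.isoEquivHom a y).symm f)]
  have ha : gmass a = (Nat.card (Σ y : Y, a ⟶ y) : ℚ)⁻¹ := by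
    rw [gmass_eq_inv_card_sigma_iso,
      Nat.card_congr (Equiv.sigmaCongrRight (Groupoid.isoEquivHom a))]
  have : Nonempty (Σ y : Y, a ⟶ y) := ⟨⟨a, 𝟙 a⟩⟩
  calc ∑ᶠ y : Y, (Nat.card (a ⟶ y) : ℚ) * gmass y
    _ = ∑ y : Y, (Nat.card (a ⟶ y) : ℚ) * gmass a := by
      rw [finsum_congr hmass, finsum_eq_sum_of_fintype]
    _ = Nat.card (Σ y : Y, a ⟶ y) * (Nat.card (Σ y : Y, a ⟶ y) : ℚ)⁻¹ := by
      rw [← Finset.sum_mul, ← Nat.cast_sum, ← Nat.card_sigma, ha]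
    _ = 1 := mul_inv_cancel₀ (Nat.cast_ne_zero.2 Nat.card_pos.ne')

theorem gcard_fibration_general {X Y : Type*} [Category X] [Groupoid Y]
    [Finite X] [Finite Y] [∀ x : X, Finite (x ≅ x)] [∀ a b : Y, Finite (a ⟶ b)] (F : X ⥤ Y) :
    gcard X = ∑ᶠ y : Y, gcard (Comma F (Functor.fromPUnit y)) * gmass y := by
  have := Fintype.ofFinite X
  have := Fintype.ofFinite Y
  calc gcard X
    _ = ∑ x : X, (∑ y : Y, (Nat.card (F.obj x ⟶ y) : ℚ) * gmass y) * gmass x := by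
      simp [gcard_eq_finsum_gmass, ← finsum_eq_sum_of_fintype, finsum_card_hom_mul_gmass]
    _ = ∑ y : Y, (∑ x : X, (Nat.card (F.obj x ⟶ y) : ℚ) * gmass x) * gmass y := by
      simp only [Finset.sum_mul]
      rw [Finset.sum_comm]
      simp only [mul_right_comm]
    _ = ∑ᶠ y : Y, gcard (Comma F (Functor.fromPUnit y)) * gmass y := by
      simp only [gcard_comma_fromPUnit, finsum_eq_sum_of_fintype]

/-- Homotopy cardinality is multiplicative over fibrations of finite groupoids: if
`F : X ⥤ Y` is a functor of finite groupoids all of whose homotopy fibers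
(the comma groupoids over objects `y : Y`) have cardinality `c`, then `‖X‖ = c·‖Y‖`. -/
theorem gcard_fibration {X Y : Type*} [Groupoid X] [Groupoid Y]
    [Finite X] [Finite Y] [∀ a b : X, Finite (a ⟶ b)] [∀ a b : Y, Finite (a ⟶ b)]
    (F : X ⥤ Y) (c : ℚ)
    (hfib : ∀ y : Y, gcard (Comma F (Functor.fromPUnit y)) = c) :
    gcard X = c * gcard Y := by
  have (x : X) : Finite (x ≅ x) := .of_equiv _ (Groupoid.isoEquivHom x x).symm
  rw [gcard_eq_finsum_gmass Y, mul_finsum]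
  exact (gcard_fibration_general F).trans (finsum_congr fun y => congrArg (· * gmass y) (hfib y))
end
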